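/- Let Ψ : (0,∞) → (0,∞) and suppose there exist functions d : (0,∞) → (0,∞) and e : (0,∞) → (0,∞) such that Ψ(q) = d(q)/e(q) for all q, d(q), e(q) ∈ ℕ for all q ∈ ℕ, and e(q) ≡ 0 (mod q) for all q ∈ ℕ. If ω : (0,∞) → (0,∞) satisfies ω(q) < ((1 − ω(e(q)))/Ψ(q)) · Ψ(e(q)) for all sufficiently large q, then E(Ψ,ω) = ∅. -/

import Mathlib

/-!
Let `x ∈ E(Ψ, ω)`. A fixed denominator admits only finitely many numerators, so there are
arbitrarily large `q` with `|x - p/q| ≤ Ψ q` for some `p`. Then `|x - p/q|` lies in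
`[(1 - ω q) Ψ q, Ψ q]`, so `x` is within `ω q * Ψ q` of one of the two endpoints `p/q ± Ψ q`.
As `Ψ q = d q / e q` and `q ∣ e q`, both endpoints are fractions with denominator `e q`, and by
hypothesis `ω q * Ψ q < (1 - ω (e q)) * Ψ (e q)`. Since `e q ≥ q` is also large, this contradicts
the lower bound defining `E(Ψ, ω)` at the denominator `e q`.
-/

open Filter Set

/-- A real number `x` is `Ψ`-approximable: `|x - p/q| ≤ Ψ q` for infinitely many
pairs `(p, q) ∈ ℤ × ℕ` (with `q > 0`).  `WSet Ψ` is the set `W(Ψ)` of such `x`. -/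
def WSet (Ψ : ℝ → ℝ) : Set ℝ :=
  {x : ℝ | {pq : ℤ × ℕ | 0 < pq.2 ∧ |x - (pq.1 : ℝ) / (pq.2 : ℝ)| ≤ Ψ (pq.2 : ℝ)}.Infinite}

/-- `ESet Ψ ω` is the set `E(Ψ, ω)` of `x ∈ W(Ψ)` such that for all sufficiently large
`q ∈ ℕ` one has `|x - p/q| ≥ (1 - ω q) * Ψ q` for every `p ∈ ℤ`. -/
def ESet (Ψ ω : ℝ → ℝ) : Set ℝ :=
  {x : ℝ | x ∈ WSet Ψ ∧ ∃ Q : ℕ, ∀ q : ℕ, Q ≤ q → ∀ p : ℤ,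
    (1 - ω (q : ℝ)) * Ψ (q : ℝ) ≤ |x - (p : ℝ) / (q : ℝ)|}

lemma finite_setOf_abs_sub_intCast_div_le {K : Type*} [Field K] [LinearOrder K]
    [IsStrictOrderedRing K] [FloorRing K] (x r : K) {q : K} (hq : 0 < q) :
    {p : ℤ | |x - p / q| ≤ r}.Finite := by
  refine (Set.finite_Icc ⌈(x - r) * q⌉ ⌊(x + r) * q⌋).subset fun p hp ↦ ?_
  obtain ⟨hlow, hup⟩ := abs_le.mp (mem_ofPred.mp hp)
  exact ⟨Int.ceil_le.mpr <| (le_div_iff₀ hq).mp (by linarith),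
    Int.le_floor.mpr <| (div_le_iff₀ hq).mp (by linarith)⟩

lemma frequently_exists_abs_sub_div_le_of_mem_WSet {Ψ : ℝ → ℝ} {x : ℝ} (hx : x ∈ WSet Ψ) :
    ∃ᶠ q : ℕ in atTop, ∃ p : ℤ, |x - p / q| ≤ Ψ q := by
  rw [frequently_atTop]
  by_contra! ⟨N, hN⟩
  have hfin : (⋃ q ∈ Ioo 0 N, (·, q) '' {p : ℤ | |x - p / q| ≤ Ψ q}).Finite :=
    (finite_Ioo 0 N).biUnion fun q hq ↦
      (finite_setOf_abs_sub_intCast_div_le x (Ψ q) (Nat.cast_pos.mpr hq.1)).image _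
  refine hx (hfin.subset ?_)
  rintro ⟨p, q⟩ ⟨hq, hpq⟩
  have hqN : q < N := not_le.mp fun h ↦ (hN q h p).not_ge hpq
  exact mem_biUnion (show q ∈ Ioo 0 N from ⟨hq, hqN⟩) ⟨p, hpq, rfl⟩

lemma exists_intCast_div_eq_add_of_dvd {K : Type*} [Field K] {q e : ℕ} (hqe : q ∣ e)
    (he : (e : K) ≠ 0) (p d : ℤ) : ∃ n : ℤ, (n : K) / e = p / q + d / e := by
  obtain ⟨k, rfl⟩ := hqe
  obtain ⟨hq, hk⟩ := mul_ne_zero_iff.mp (Nat.cast_mul (α := K) q k ▸ he)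
  refine ⟨p * k + d, ?_⟩
  push_cast
  field_simp

lemma abs_sub_le_or_abs_add_le_of_abs_abs_sub_le {G : Type*} [AddCommGroup G] [LinearOrder G]
    [IsOrderedAddMonoid G] {y a δ : G} (h : |(|y| - a)| ≤ δ) : |y - a| ≤ δ ∨ |y + a| ≤ δ := by
  rcases abs_choice y with hy | hy
  · exact .inl (by rwa [hy] at h)
  · exact .inr (by rwa [hy, ← neg_add', abs_neg] at h)

lemma exists_abs_sub_intCast_div_le {K : Type*} [Field K] [LinearOrder K] [IsStrictOrderedRing K]
    {x δ : K} {q e : ℕ} {p d : ℤ} (hqe : q ∣ e) (he : e ≠ 0) (h : |(|x - p / q| - d / e)| ≤ δ) :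
    ∃ n : ℤ, |x - n / e| ≤ δ := by
  have he' : (e : K) ≠ 0 := Nat.cast_ne_zero.mpr he
  rcases abs_sub_le_or_abs_add_le_of_abs_abs_sub_le h with hδ | hδ
  · obtain ⟨n, hn⟩ := exists_intCast_div_eq_add_of_dvd hqe he' p d
    exact ⟨n, by rwa [hn, ← sub_sub]⟩
  · obtain ⟨n, hn⟩ := exists_intCast_div_eq_add_of_dvd hqe he' p (-d)
    exact ⟨n, by rwa [hn, Int.cast_neg, neg_div, ← sub_eq_add_neg, ← sub_add]⟩

lemma exists_int_div_nat_of_lt_div_mul {Ψ ω : ℝ → ℝ} {d e : ℝ} {q : ℕ} (hΨpos : 0 < Ψ q)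
    (hepos : 0 < e) (hΨde : Ψ q = d / e) (hd : ∃ m : ℤ, d = m)
    (hediv : ∃ k : ℕ, e = (q * k : ℕ)) (hsmall : ω q < (1 - ω e) / Ψ q * Ψ e) :
    ∃ (d : ℤ) (e : ℕ), e ≠ 0 ∧ q ∣ e ∧ Ψ q = d / e ∧ ω q * Ψ q < (1 - ω e) * Ψ e := by
  obtain ⟨m, rfl⟩ := hd
  obtain ⟨k, rfl⟩ := hediv
  rw [div_mul_eq_mul_div, lt_div_iff₀ hΨpos] at hsmall
  exact ⟨m, q * k, (Nat.cast_pos.mp hepos).ne', dvd_mul_right q k, hΨde, hsmall⟩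

theorem ESet_eq_empty_of_rational'_general {Ψ ω : ℝ → ℝ}
    (h : ∀ᶠ q : ℕ in atTop, ∃ (d : ℤ) (e : ℕ), e ≠ 0 ∧ q ∣ e ∧ Ψ q = d / e ∧
      ω q * Ψ q < (1 - ω e) * Ψ e) :
    ESet Ψ ω = ∅ := by
  refine eq_empty_of_forall_notMem fun x ⟨hxW, Q, hQ⟩ ↦ ?_
  obtain ⟨q, ⟨p, hup⟩, ⟨d, e, he, hqe, hΨ, hω⟩, hQq⟩ :=
    ((frequently_exists_abs_sub_div_le_of_mem_WSet hxW).and_eventually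
      (h.and (eventually_ge_atTop Q))).exists
  have hclose : |(|x - p / q| - d / e)| ≤ ω q * Ψ q := by
    rw [← hΨ, abs_of_nonpos (sub_nonpos.mpr hup)]
    linarith [hQ q hQq p]
  have hQe : Q ≤ e := hQq.trans (Nat.le_of_dvd (Nat.pos_of_ne_zero he) hqe)
  obtain ⟨n, hn⟩ := exists_abs_sub_intCast_div_le hqe he hclose
  exact ((hQ e hQe n).trans hn).not_gt hω

/-- **Theorem.** Suppose `Ψ = d/e` on `(0,∞)` where `d(q), e(q)` are positive integers for
every `q ∈ ℕ`, and `e(q) ≡ 0 (mod q)` for all `q ∈ ℕ`.  If `ω : (0,∞) → (0,∞)` satisfies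
`ω(q) < ((1 − ω(e(q)))/Ψ(q))·Ψ(e(q))` for all sufficiently large `q`, then `E(Ψ,ω) = ∅`. -/
theorem ESet_eq_empty_of_rational' (Ψ ω d e : ℝ → ℝ)
    (hΨpos : ∀ q : ℝ, 0 < q → 0 < Ψ q)
    (hωpos : ∀ q : ℝ, 0 < q → 0 < ω q)
    (hdpos : ∀ q : ℝ, 0 < q → 0 < d q)
    (hepos : ∀ q : ℝ, 0 < q → 0 < e q)
    (hΨde : ∀ q : ℝ, 0 < q → Ψ q = d q / e q)
    (hdnat : ∀ q : ℕ, 0 < q → ∃ k : ℕ, d (q : ℝ) = (k : ℝ))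
    (hediv : ∀ q : ℕ, 0 < q → ∃ k : ℕ, e (q : ℝ) = ((q * k : ℕ) : ℝ))
    (hsmall : ∀ᶠ q : ℝ in Filter.atTop,
      ω q < (1 - ω (e q)) / Ψ q * Ψ (e q)) :
    ESet Ψ ω = ∅ :=
  ESet_eq_empty_of_rational'_general <|
    (hsmall.natCast_atTop.and (eventually_gt_atTop 0)).mono fun q ⟨hω, hq⟩ ↦
      have hq' : (0 : ℝ) < q := Nat.cast_pos.mpr hq
      exists_int_div_nat_of_lt_div_mul (hΨpos q hq') (hepos q hq') (hΨde q hq')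
        ((hdnat q hq).imp' Nat.cast fun _ h ↦ mod_cast h) (hediv q hq) hω
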